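/- Fix strikes 0 < K_1 < K_2 < … < K_N and a barrier U > 0 with U ≠ K_j for all j, and let a_j, b_j : (0,∞) → (0,∞), j = 1,…,N, be functions each admitting a finite strictly positive limit as τ → 0+. Then: (1) there exist σ*₁, σ*₂ > 0 and T > 0 such that for all τ ∈ (0,T], all i with K_i < U, all j with K_j > U, and all s, s' > 0: C^bs(U,K_i,τ,s) = C^{σ*}(U,K_i,τ) implies s ≤ a_i(τ), and C^bs(U,K_j,τ,s') = C^{σ*}(U,K_j,τ) implies s' ≥ b_j(τ) (existence of an upper dominating PCLVG surface); and (2) there exist σ_{*1}, σ_{*2} > 0 and T > 0 such that for all τ ∈ (0,T], all i with K_i < U, all j with K_j > U, and all s, s' > 0: C^bs(U,K_i,τ,s) = C^{σ_*}(U,K_i,τ) implies s ≥ b_i(τ), and C^bs(U,K_j,τ,s') = C^{σ_*}(U,K_j,τ) implies s' ≤ a_j(τ) (existence of a lower dominating PCLVG surface). -/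

import Mathlib

open MeasureTheory Filter Set

/-- Standard normal cumulative distribution function. -/
noncomputable def stdNormalCDF (x : ℝ) : ℝ :=
  (Real.sqrt (2 * Real.pi))⁻¹ * ∫ y in Set.Iic x, Real.exp (-(y ^ 2) / 2)

/-- Black–Scholes call price with zero interest and dividend rates. -/
noncomputable def bsCall (S K τ σ : ℝ) : ℝ :=
  let d1 := (Real.log (S / K) + σ ^ 2 * τ / 2) / (σ * Real.sqrt τ)
  S * stdNormalCDF d1 - K * stdNormalCDF (d1 - σ * Real.sqrt τ)

/-- Black–Scholes put price with zero interest and dividend rates. -/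
noncomputable def bsPut (S K τ σ : ℝ) : ℝ := bsCall S K τ σ - S + K

/-- The denominator appearing in the PCLVG call price formula. -/
noncomputable def pclvgD (σ1 σ2 U τ : ℝ) : ℝ :=
  1 / σ1 + 1 / σ2 - (1 / σ2 - 1 / σ1) * Real.exp (-2 * U / (σ1 * τ))

/-- The explicit PCLVG call price `C^σ(U,K,τ)`. -/
noncomputable def pclvgCall (σ1 σ2 U K τ : ℝ) : ℝ :=
  if K < U then
    (U - K) +
      τ * Real.exp (-(U - K) / (σ1 * τ)) * (1 - Real.exp (-2 * K / (σ1 * τ))) /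
        pclvgD σ1 σ2 U τ
  else
    τ * Real.exp (-(K - U) / (σ2 * τ)) * (1 - Real.exp (-2 * U / (σ1 * τ))) /
      pclvgD σ1 σ2 U τ

/-- The PCLVG put price `P^σ(U,K,τ) = C^σ(U,K,τ) − (U − K)`. -/
noncomputable def pclvgPut (σ1 σ2 U K τ : ℝ) : ℝ := pclvgCall σ1 σ2 U K τ - (U - K)

open Real in
lemma N_integrable : Integrable (fun y : ℝ => Real.exp (-(y ^ 2) / 2)) := by
  have h := integrable_exp_neg_mul_sq (b := (1/2 : ℝ)) (by norm_num)
  refine h.congr (Filter.Eventually.of_forall fun y => ?_)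
  show Real.exp _ = Real.exp _
  congr 1; ring

lemma N_total : ∫ y : ℝ, Real.exp (-(y ^ 2) / 2) = Real.sqrt (2 * Real.pi) := by
  have h := integral_gaussian (1/2 : ℝ)
  rw [show Real.pi / (1/2) = 2 * Real.pi by ring] at h
  rw [← h]
  congr 1; ext y; congr 1; ring

lemma N_c_pos : 0 < (Real.sqrt (2 * Real.pi))⁻¹ := by positivity

lemma N_nonneg (x : ℝ) : 0 ≤ stdNormalCDF x := by
  unfold stdNormalCDF
  exact mul_nonneg N_c_pos.le (integral_nonneg fun y => (Real.exp_pos _).le)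

lemma N_neg (x : ℝ) : stdNormalCDF (-x) = 1 - stdNormalCDF x := by
  unfold stdNormalCDF
  have h1 : ∫ y in Set.Iic (-x), Real.exp (-(y ^ 2) / 2)
      = ∫ y in Set.Ioi x, Real.exp (-(y ^ 2) / 2) := by
    have := integral_comp_neg_Iic (-x) (fun y : ℝ => Real.exp (-(y ^ 2) / 2))
    simpa using this
  have h2 := integral_add_compl (s := Set.Iic x) measurableSet_Iic N_integrable
  rw [N_total, Set.compl_Iic] at h2
  rw [h1, eq_sub_iff_add_eq, ← mul_add, add_comm, h2]
  exact inv_mul_cancel₀ (by positivity)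

lemma N_tail (x : ℝ) (hx : x ≤ 0) : stdNormalCDF x ≤ Real.exp (-(x ^ 2) / 2) := by
  unfold stdNormalCDF
  have hi : Integrable (fun y : ℝ => Real.exp (-(x ^ 2) / 2) * Real.exp (-((y - x) ^ 2) / 2)) :=
    (N_integrable.comp_sub_right x).const_mul _
  have h1 : ∫ y in Set.Iic x, Real.exp (-(y ^ 2) / 2)
      ≤ ∫ y in Set.Iic x, Real.exp (-(x ^ 2) / 2) * Real.exp (-((y - x) ^ 2) / 2) := by
    refine setIntegral_mono_on N_integrable.integrableOn hi.integrableOn measurableSet_Iic ?_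
    intro y hy
    rw [← Real.exp_add]
    apply Real.exp_le_exp.2
    have hy' : y ≤ x := hy
    nlinarith [mul_nonneg (neg_nonneg.2 hx) (sub_nonneg.2 hy')]
  have h2 : ∫ y in Set.Iic x, Real.exp (-(x ^ 2) / 2) * Real.exp (-((y - x) ^ 2) / 2)
      ≤ ∫ y, Real.exp (-(x ^ 2) / 2) * Real.exp (-((y - x) ^ 2) / 2) :=
    setIntegral_le_integral hi (Filter.Eventually.of_forall fun y => by
      show (0:ℝ) ≤ _
      positivity)
  have h3 : ∫ y, Real.exp (-(x ^ 2) / 2) * Real.exp (-((y - x) ^ 2) / 2)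
      = Real.exp (-(x ^ 2) / 2) * Real.sqrt (2 * Real.pi) := by
    rw [integral_const_mul, integral_sub_right_eq_self (fun y : ℝ => Real.exp (-(y ^ 2) / 2)) x,
      N_total]
  have h4 := h1.trans (h2.trans h3.le)
  rw [inv_mul_le_iff₀ (by positivity)]
  linarith

lemma N_deriv (x : ℝ) :
    HasDerivAt stdNormalCDF ((Real.sqrt (2 * Real.pi))⁻¹ * Real.exp (-(x ^ 2) / 2)) x := by
  have hc : Continuous (fun y : ℝ => Real.exp (-(y ^ 2) / 2)) := by fun_prop
  have h1 : HasDerivAt (fun u => ∫ y in (0:ℝ)..u, Real.exp (-(y ^ 2) / 2))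
      (Real.exp (-(x ^ 2) / 2)) x :=
    intervalIntegral.integral_hasDerivAt_right (hc.intervalIntegrable _ _)
      (hc.stronglyMeasurableAtFilter _ _) hc.continuousAt
  have h2 : stdNormalCDF = fun u => (Real.sqrt (2 * Real.pi))⁻¹ *
      ((∫ y in Set.Iic (0:ℝ), Real.exp (-(y ^ 2) / 2)) +
        ∫ y in (0:ℝ)..u, Real.exp (-(y ^ 2) / 2)) := by
    funext u
    unfold stdNormalCDF
    rw [← intervalIntegral.integral_Iic_sub_Iic N_integrable.integrableOn
      N_integrable.integrableOn]
    ring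
  rw [h2]
  exact (h1.const_add _).const_mul _

noncomputable def bsF (S K v : ℝ) : ℝ :=
  S * stdNormalCDF (Real.log (S / K) / v + v / 2) -
    K * stdNormalCDF (Real.log (S / K) / v - v / 2)

lemma bsCall_eq (S K τ s : ℝ) (hτ : 0 < τ) (hs : 0 < s) :
    bsCall S K τ s = bsF S K (s * Real.sqrt τ) := by
  have h : 0 < Real.sqrt τ := Real.sqrt_pos.2 hτ
  have h2 : (Real.log (S / K) + s ^ 2 * τ / 2) / (s * Real.sqrt τ)
      = Real.log (S / K) / (s * Real.sqrt τ) + (s * Real.sqrt τ) / 2 := by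
    rw [div_add_div _ _ (by positivity) (by norm_num), div_eq_div_iff (by positivity) (by positivity)]
    have := Real.sq_sqrt hτ.le
    linear_combination (-(s ^ 2 * (s * Real.sqrt τ))) * this
  unfold bsCall bsF
  simp only [h2]
  ring_nf

lemma bsCall_sym (S K τ s : ℝ) (hS : 0 < S) (hK : 0 < K) (hτ : 0 < τ) (hs : 0 < s) :
    bsCall S K τ s = (S - K) + bsCall K S τ s := by
  rw [bsCall_eq _ _ _ _ hτ hs, bsCall_eq _ _ _ _ hτ hs]
  unfold bsF
  set v := s * Real.sqrt τ
  have hl : Real.log (K / S) = - Real.log (S / K) := by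
    rw [← Real.log_inv, inv_div]
  rw [hl, show -Real.log (S / K) / v + v / 2 = -(Real.log (S / K) / v - v / 2) by ring,
    show -Real.log (S / K) / v - v / 2 = -(Real.log (S / K) / v + v / 2) by ring, N_neg, N_neg]
  ring

lemma bsF_deriv (S K v : ℝ) (hS : 0 < S) (hK : 0 < K) (hv : 0 < v) :
    HasDerivAt (bsF S K) (S * ((Real.sqrt (2 * Real.pi))⁻¹ *
      Real.exp (-((Real.log (S / K) / v + v / 2) ^ 2) / 2))) v := by
  set l := Real.log (S / K) with hl
  have hinv : HasDerivAt (fun w : ℝ => l / w) (-l / v ^ 2) v := by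
    have := (hasDerivAt_inv hv.ne').const_mul l
    refine (this.congr_deriv ?_)
    ring
  have hid : HasDerivAt (fun w : ℝ => w / 2) (1 / 2) v := (hasDerivAt_id v).div_const 2
  have h1 := ((N_deriv (l / v + v / 2)).comp v (hinv.add hid)).const_mul S
  have h2 := ((N_deriv (l / v - v / 2)).comp v (hinv.sub hid)).const_mul K
  have h3 := h1.sub h2
  refine h3.congr_deriv ?_
  have key : K * Real.exp (-((l / v - v / 2) ^ 2) / 2)
      = S * Real.exp (-((l / v + v / 2) ^ 2) / 2) := by
    have e : -((l / v - v / 2) ^ 2) / 2 = l + -((l / v + v / 2) ^ 2) / 2 := by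
      field_simp; ring
    rw [e, Real.exp_add, hl, Real.exp_log (by positivity)]
    field_simp
  linear_combination (-((Real.sqrt (2 * Real.pi))⁻¹ * (-l / v ^ 2 - 1 / 2))) * key

lemma bsF_mono (S K : ℝ) (hS : 0 < S) (hK : 0 < K) {v w : ℝ} (hv : 0 < v) (hvw : v ≤ w) :
    bsF S K v ≤ bsF S K w := by
  have : MonotoneOn (bsF S K) (Set.Ioi 0) := by
    apply monotoneOn_of_deriv_nonneg (convex_Ioi 0)
    · intro x hx
      exact (bsF_deriv S K x hS hK hx).continuousAt.continuousWithinAt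
    · intro x hx
      rw [interior_Ioi] at hx
      exact (bsF_deriv S K x hS hK hx).differentiableAt.differentiableWithinAt
    · intro x hx
      rw [interior_Ioi] at hx
      rw [(bsF_deriv S K x hS hK hx).deriv]
      positivity
  exact this hv (lt_of_lt_of_le hv hvw) hvw

lemma log_neg' {S K : ℝ} (hS : 0 < S) (hSK : S < K) : Real.log (S / K) < 0 := by
  apply Real.log_neg (by have := hS.trans hSK; positivity)
  rw [div_lt_one (hS.trans hSK)]; exact hSK

lemma bsF_nonneg (S K v : ℝ) (hS : 0 < S) (hSK : S < K) (hv : 0 < v) : 0 ≤ bsF S K v := by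
  have hK := hS.trans hSK
  have hl := log_neg' hS hSK
  set l := Real.log (S / K) with hldef
  have hlow : ∀ᶠ w in nhdsWithin (0:ℝ) (Set.Ioi 0), -K * Real.exp (l / w) ≤ bsF S K v := by
    have hm : Set.Ioo 0 (min v (-l / 2)) ∈ nhdsWithin (0:ℝ) (Set.Ioi 0) :=
      Ioo_mem_nhdsGT (lt_min hv (by linarith))
    filter_upwards [hm] with w hw
    have hw0 : 0 < w := hw.1
    have hwv : w < v := hw.2.trans_le (min_le_left _ _)
    have hwl : w < -l / 2 := hw.2.trans_le (min_le_right _ _)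
    refine le_trans ?_ (bsF_mono S K hS hK hw0 hwv.le)
    unfold bsF
    rw [← hldef]
    have h1 := N_nonneg (l / w + w / 2)
    have hlw : l / w < -2 := by
      rw [div_lt_iff₀ hw0]; linarith
    have h2 := N_tail (l / w - w / 2) (by linarith)
    have h3 : Real.exp (-((l / w - w / 2) ^ 2) / 2) ≤ Real.exp (l / w) := by
      apply Real.exp_le_exp.2
      nlinarith
    have h4 := mul_le_mul_of_nonneg_left (h2.trans h3) hK.le
    have h5 := mul_nonneg hS.le h1
    linarith
  have hlim : Tendsto (fun w : ℝ => -K * Real.exp (l / w)) (nhdsWithin (0:ℝ) (Set.Ioi 0))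
      (nhds (-K * 0)) := by
    apply Tendsto.const_mul
    apply Real.tendsto_exp_atBot.comp
    exact (tendsto_inv_nhdsGT_zero (𝕜 := ℝ)).const_mul_atTop_of_neg hl
  have := le_of_tendsto hlim hlow
  linarith

lemma bsF_lower (S K v : ℝ) (hS : 0 < S) (hSK : S < K) (hv : 0 < v)
    (hvl : v ^ 2 ≤ -2 * Real.log (S / K)) :
    v / 2 * (S * ((Real.sqrt (2 * Real.pi))⁻¹ *
      Real.exp (-(2 * Real.log (S / K) ^ 2 / v ^ 2)))) ≤ bsF S K v := by
  have hK := hS.trans hSK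
  have hl := log_neg' hS hSK
  obtain ⟨x, hx, hxe⟩ := exists_hasDerivAt_eq_slope (bsF S K) _ (half_lt_self hv)
    (fun y hy => (bsF_deriv S K y hS hK (by linarith [hy.1])).continuousAt.continuousWithinAt)
    (fun y hy => bsF_deriv S K y hS hK (by linarith [hy.1]))
  have h0 := bsF_nonneg S K (v / 2) hS hSK (by linarith)
  set l := Real.log (S / K) with hldef
  rw [eq_div_iff (by linarith)] at hxe
  have hx0 : 0 < x := by linarith [hx.1]
  have hlo : 2 * l / v ≤ l / x + x / 2 := by
    have : 2 * l / v ≤ l / x := by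
      rw [div_le_div_iff₀ hv hx0]; nlinarith [hx.1]
    linarith
  have hhi : l / x + x / 2 ≤ -(2 * l / v) := by
    have h1 : l / x ≤ 0 := (div_neg_of_neg_of_pos hl hx0).le
    have h2 : v / 2 ≤ -(2 * l / v) := by
      rw [← neg_div, div_le_div_iff₀ (by norm_num) hv]; nlinarith
    linarith [hx.2]
  have hsq : (l / x + x / 2) ^ 2 ≤ (2 * l / v) ^ 2 := by
    nlinarith
  have hexp : Real.exp (-(2 * l ^ 2 / v ^ 2)) ≤ Real.exp (-((l / x + x / 2) ^ 2) / 2) := by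
    apply Real.exp_le_exp.2
    have : (2 * l / v) ^ 2 = 2 * (2 * l ^ 2 / v ^ 2) := by ring
    linarith
  calc _ ≤ v / 2 * (S * ((Real.sqrt (2 * Real.pi))⁻¹ *
      Real.exp (-((l / x + x / 2) ^ 2) / 2))) := by gcongr
    _ = bsF S K v - bsF S K (v / 2) := by rw [← hxe]; ring
    _ ≤ _ := by linarith

lemma ev_small {x : ℝ} (hx : 0 < x) :
    ∀ᶠ τ in nhdsWithin (0:ℝ) (Set.Ioi 0), 0 < τ ∧ τ < x :=
  Ioo_mem_nhdsGT hx

lemma bs_big (S K α : ℝ) (hS : 0 < S) (hSK : S < K) (hα : 0 < α) :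
    ∀ᶠ σ in nhdsWithin (0:ℝ) (Set.Ioi 0), ∀ C : ℝ, 0 < C →
      ∀ᶠ τ in nhdsWithin (0:ℝ) (Set.Ioi 0), ∀ s, α ≤ s →
        C * (τ * Real.exp (-(K - S) / (σ * τ))) < bsCall S K τ s := by
  have hK := hS.trans hSK
  have hl := log_neg' hS hSK
  set l := Real.log (S / K) with hldef
  have hM : 0 < 2 * l ^ 2 / α ^ 2 := by
    have := hl.ne
    positivity
  filter_upwards [ev_small (div_pos (sub_pos.2 hSK) hM)] with σ hσ C hC
  have hσM : 2 * l ^ 2 / α ^ 2 ≤ (K - S) / σ := by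
    rw [le_div_iff₀ hσ.1]
    have := (lt_div_iff₀ hM).1 hσ.2
    linarith
  set c := α / 2 * (S * (Real.sqrt (2 * Real.pi))⁻¹) with hc
  have hcpos : 0 < c := by have := N_c_pos; positivity
  have e1 : 0 < (c / C) ^ 2 := by positivity
  have e2 : 0 < -2 * l / α ^ 2 := by
    apply div_pos <;> [linarith; positivity]
  filter_upwards [ev_small e1, ev_small e2] with τ h1 h2 s hs
  have hτ := h1.1
  have hr : 0 < Real.sqrt τ := Real.sqrt_pos.2 hτ
  have hr2 := Real.sq_sqrt hτ.le
  rw [bsCall_eq S K τ s hτ (by linarith)]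
  refine lt_of_lt_of_le ?_ (bsF_mono S K hS hK (v := α * Real.sqrt τ) (by positivity) (by gcongr))
  refine lt_of_lt_of_le ?_ (bsF_lower S K (α * Real.sqrt τ) hS hSK (by positivity) ?_)
  · rw [← hldef, mul_pow, hr2]
    have hrC : C * Real.sqrt τ < c := by
      have : Real.sqrt τ < c / C := by
        rw [Real.sqrt_lt' (by positivity)]; exact h1.2
      rw [lt_div_iff₀ hC] at this
      linarith
    have hexp : Real.exp (-(K - S) / (σ * τ)) ≤ Real.exp (-(2 * l ^ 2 / (α ^ 2 * τ))) := by
      apply Real.exp_le_exp.2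
      rw [neg_div, neg_le_neg_iff, ← div_div, ← div_div]
      gcongr
    calc C * (τ * Real.exp (-(K - S) / (σ * τ)))
        ≤ C * (τ * Real.exp (-(2 * l ^ 2 / (α ^ 2 * τ)))) := by gcongr
      _ = (C * Real.sqrt τ) * (Real.sqrt τ * Real.exp (-(2 * l ^ 2 / (α ^ 2 * τ)))) := by
          nth_rewrite 1 [← hr2]; ring
      _ < c * (Real.sqrt τ * Real.exp (-(2 * l ^ 2 / (α ^ 2 * τ)))) := by gcongr
      _ = _ := by rw [hc]; ring
  · rw [← hldef, mul_pow, hr2]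
    have := (lt_div_iff₀ (by positivity)).1 h2.2
    linarith

lemma bs_small (S K β : ℝ) (hS : 0 < S) (hSK : S < K) (hβ : 0 < β) :
    ∀ᶠ σ in (atTop : Filter ℝ), ∀ c : ℝ, 0 < c →
      ∀ᶠ τ in nhdsWithin (0:ℝ) (Set.Ioi 0), ∀ s, 0 < s → s ≤ β →
        bsCall S K τ s < c * (τ * Real.exp (-(K - S) / (σ * τ))) := by
  have hK := hS.trans hSK
  have hl := log_neg' hS hSK
  set l := Real.log (S / K) with hldef
  set m := l ^ 2 / (16 * β ^ 2) with hm
  have hmpos : 0 < m := by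
    have := hl.ne
    positivity
  filter_upwards [eventually_gt_atTop 0, eventually_ge_atTop ((K - S) / m)] with σ hσ hσm c hc
  have hσM : (K - S) / σ ≤ m := by
    rw [div_le_iff₀ hσ]
    have := (div_le_iff₀ hmpos).1 hσm
    linarith
  have e1 : 0 < m ^ 2 * c / (2 * S) := by positivity
  have e2 : 0 < - l / β ^ 2 := by
    apply div_pos <;> [linarith; positivity]
  filter_upwards [ev_small e1, ev_small e2] with τ h1 h2 s hs hsβ
  have hτ := h1.1
  have hr : 0 < Real.sqrt τ := Real.sqrt_pos.2 hτ
  have hr2 := Real.sq_sqrt hτ.le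
  rw [bsCall_eq S K τ s hτ hs]
  set r := Real.sqrt τ
  have hd : l / (s * r) + s * r / 2 ≤ l / (2 * β * r) := by
    have a1 : l / (s * r) ≤ l / (β * r) := by
      rw [div_le_div_iff₀ (by positivity) (by positivity)]
      have : s * r ≤ β * r := by gcongr
      nlinarith
    have a2 : s * r / 2 ≤ β * r / 2 := by gcongr
    have a3 : β * r / 2 ≤ - l / (2 * β * r) := by
      rw [div_le_div_iff₀ (by norm_num) (by positivity)]
      have := (lt_div_iff₀ (by positivity)).1 h2.2
      rw [← hr2] at this
      nlinarith
    have a4 : l / (β * r) = 2 * (l / (2 * β * r)) := by field_simp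
    rw [neg_div] at a3
    linarith
  have hneg : l / (2 * β * r) < 0 := div_neg_of_neg_of_pos hl (by positivity)
  have hN : stdNormalCDF (l / (s * r) + s * r / 2) ≤ Real.exp (-(2 * m / τ)) := by
    refine (N_tail _ (by linarith)).trans (Real.exp_le_exp.2 ?_)
    have q : (l / (2 * β * r)) ^ 2 ≤ (l / (s * r) + s * r / 2) ^ 2 := by nlinarith
    have q2 : (l / (2 * β * r)) ^ 2 = 2 * (2 * m / τ) := by
      rw [hm, ← hr2]; field_simp; norm_num
    linarith
  have hquad := Real.quadratic_le_exp_of_nonneg (x := m / τ) (by positivity)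
  have hbig : S < c * (τ * Real.exp (m / τ)) := by
    have b1 : (m / τ) ^ 2 / 2 < Real.exp (m / τ) := by
      have : 0 < m / τ := by positivity
      linarith
    have b2 : S < c * (τ * ((m / τ) ^ 2 / 2)) := by
      have : c * (τ * ((m / τ) ^ 2 / 2)) = (m ^ 2 * c / 2) / τ := by field_simp
      rw [this, lt_div_iff₀ hτ]
      have := (lt_div_iff₀ (by positivity)).1 h1.2
      linarith
    refine b2.trans ?_
    gcongr
  have hexp : Real.exp (-(m / τ)) ≤ Real.exp (-(K - S) / (σ * τ)) := by
    apply Real.exp_le_exp.2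
    rw [neg_div, neg_le_neg_iff, ← div_div]
    gcongr
  calc bsF S K (s * r) ≤ S * stdNormalCDF (l / (s * r) + s * r / 2) := by
        unfold bsF
        have := mul_nonneg hK.le (N_nonneg (Real.log (S / K) / (s * r) - s * r / 2))
        linarith
    _ ≤ S * Real.exp (-(2 * m / τ)) := by gcongr
    _ < c * (τ * Real.exp (m / τ)) * Real.exp (-(2 * m / τ)) := by gcongr
    _ = c * (τ * Real.exp (-(m / τ))) := by
        rw [show -(m / τ) = m / τ + -(2 * m / τ) by ring, Real.exp_add]; ring
    _ ≤ _ := by gcongr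

lemma D_bounds (σ1 σ2 U τ : ℝ) (h1 : 0 < σ1) (h2 : 0 < σ2) (hU : 0 < U) (hτ : 0 < τ) :
    1 / σ1 ≤ pclvgD σ1 σ2 U τ ∧ pclvgD σ1 σ2 U τ ≤ 2 / σ1 + 1 / σ2 := by
  unfold pclvgD
  have he : Real.exp (-2 * U / (σ1 * τ)) ≤ 1 := by
    rw [Real.exp_le_one_iff]
    exact div_nonpos_of_nonpos_of_nonneg (by linarith) (by positivity)
  have he0 := Real.exp_pos (-2 * U / (σ1 * τ))
  set e := Real.exp (-2 * U / (σ1 * τ))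
  have p1 : 0 < 1 / σ1 := by positivity
  have p2 : 0 < 1 / σ2 := by positivity
  rw [show 2 / σ1 = 2 * (1 / σ1) by ring]
  constructor <;> nlinarith [mul_nonneg p1.le he0.le, mul_nonneg p2.le he0.le,
    mul_nonneg p1.le (sub_nonneg.2 he), mul_nonneg p2.le (sub_nonneg.2 he)]

lemma otm_bounds (σ1 σ2 U X E : ℝ) (h1 : 0 < σ1) (h2 : 0 < σ2) (hU : 0 < U) (hX : 0 < X) :
    ∀ᶠ τ in nhdsWithin (0:ℝ) (Set.Ioi 0),
      τ * Real.exp (E / τ) * (1 - Real.exp (-2 * X / (σ1 * τ))) / pclvgD σ1 σ2 U τ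
        ≤ σ1 * (τ * Real.exp (E / τ)) ∧
      ((2 * (2 / σ1 + 1 / σ2))⁻¹) * (τ * Real.exp (E / τ)) ≤
      τ * Real.exp (E / τ) * (1 - Real.exp (-2 * X / (σ1 * τ))) / pclvgD σ1 σ2 U τ := by
  filter_upwards [ev_small (show 0 < 2 * X / σ1 by positivity)] with τ h
  have hτ := h.1
  obtain ⟨d1, d2⟩ := D_bounds σ1 σ2 U τ h1 h2 hU hτ
  have p1 : 0 < 1 / σ1 := by positivity
  have hD := p1.trans_le d1
  have hq : 0 < τ * Real.exp (E / τ) := by positivity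
  set q := τ * Real.exp (E / τ)
  have hx : 1 ≤ 2 * X / (σ1 * τ) := by
    rw [le_div_iff₀ (by positivity)]
    have := (lt_div_iff₀ h1).1 h.2
    linarith
  have he : Real.exp (-2 * X / (σ1 * τ)) ≤ 1 / 2 := by
    rw [show -2 * X / (σ1 * τ) = -(2 * X / (σ1 * τ)) by ring, Real.exp_neg, one_div]
    apply inv_anti₀ (by norm_num)
    linarith [Real.add_one_le_exp (2 * X / (σ1 * τ))]
  have he0 := Real.exp_pos (-2 * X / (σ1 * τ))
  set e := Real.exp (-2 * X / (σ1 * τ))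
  constructor
  · rw [div_le_iff₀ hD]
    have : 1 ≤ σ1 * pclvgD σ1 σ2 U τ := by
      rw [div_le_iff₀ h1] at d1; linarith
    nlinarith [mul_pos hq he0]
  · rw [le_div_iff₀ hD, inv_mul_eq_div, div_mul_eq_mul_div, div_le_iff₀ (by positivity)]
    have t1 := mul_le_mul_of_nonneg_left d2 hq.le
    have t2 : q * (2 / σ1 + 1 / σ2) ≤ q * (1 - e) * (2 * (2 / σ1 + 1 / σ2)) := by
      have : 0 < 2 / σ1 + 1 / σ2 := by positivity
      nlinarith [mul_pos hq this]
    linarith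

/-- Out-of-the-money bound for strikes below the barrier. -/
lemma put_bounds (σ1 σ2 U K : ℝ) (h1 : 0 < σ1) (h2 : 0 < σ2) (hK : 0 < K) (hKU : K < U) :
    ∃ c C : ℝ, 0 < c ∧ 0 < C ∧ ∀ᶠ τ in nhdsWithin (0:ℝ) (Set.Ioi 0),
      ∀ s, 0 < s → bsCall U K τ s = pclvgCall σ1 σ2 U K τ →
      bsCall K U τ s ≤ C * (τ * Real.exp (-(U - K) / (σ1 * τ))) ∧
      c * (τ * Real.exp (-(U - K) / (σ1 * τ))) ≤ bsCall K U τ s := by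
  have hU := hK.trans hKU
  refine ⟨(2 * (2 / σ1 + 1 / σ2))⁻¹, σ1, by positivity, h1, ?_⟩
  filter_upwards [otm_bounds σ1 σ2 U K (-(U - K) / σ1) h1 h2 hU hK, self_mem_nhdsWithin]
    with τ h hτ s hs he
  rw [bsCall_sym U K τ s hU hK hτ hs] at he
  unfold pclvgCall at he
  rw [if_pos hKU] at he
  rw [add_left_cancel he, ← div_div]
  exact h

lemma call_bounds (σ1 σ2 U K : ℝ) (h1 : 0 < σ1) (h2 : 0 < σ2) (hU : 0 < U) (hKU : U < K) :
    ∃ c C : ℝ, 0 < c ∧ 0 < C ∧ ∀ᶠ τ in nhdsWithin (0:ℝ) (Set.Ioi 0),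
      ∀ s, 0 < s → bsCall U K τ s = pclvgCall σ1 σ2 U K τ →
      bsCall U K τ s ≤ C * (τ * Real.exp (-(K - U) / (σ2 * τ))) ∧
      c * (τ * Real.exp (-(K - U) / (σ2 * τ))) ≤ bsCall U K τ s := by
  refine ⟨(2 * (2 / σ1 + 1 / σ2))⁻¹, σ1, by positivity, h1, ?_⟩
  filter_upwards [otm_bounds σ1 σ2 U U (-(K - U) / σ2) h1 h2 hU hU] with τ h s hs he
  unfold pclvgCall at he
  rw [if_neg hKU.not_gt] at he
  rw [he, ← div_div (-(K - U)) σ2]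
  exact h

/-- Small local volatility forces the implied volatility below the belief. -/
lemma cmp_big (S K : ℝ) (hS : 0 < S) (hSK : S < K) (a : ℝ → ℝ)
    (ha : ∃ L : ℝ, 0 < L ∧ Tendsto a (nhdsWithin 0 (Set.Ioi 0)) (nhds L)) :
    ∀ᶠ σ in nhdsWithin (0:ℝ) (Set.Ioi 0), ∀ C : ℝ, 0 < C →
      ∀ᶠ τ in nhdsWithin (0:ℝ) (Set.Ioi 0), ∀ s,
        bsCall S K τ s ≤ C * (τ * Real.exp (-(K - S) / (σ * τ))) → s ≤ a τ := by
  obtain ⟨L, hL, hlim⟩ := ha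
  filter_upwards [bs_big S K (L / 2) hS hSK (by linarith)] with σ h C hC
  filter_upwards [h C hC, hlim.eventually_const_lt (half_lt_self hL)] with τ h1 h2 s hs
  by_contra! hcon
  exact absurd (h1 s (by linarith)) hs.not_gt

lemma cmp_small (S K : ℝ) (hS : 0 < S) (hSK : S < K) (b : ℝ → ℝ)
    (hb : ∃ L : ℝ, 0 < L ∧ Tendsto b (nhdsWithin 0 (Set.Ioi 0)) (nhds L)) :
    ∀ᶠ σ in (atTop : Filter ℝ), ∀ c : ℝ, 0 < c →
      ∀ᶠ τ in nhdsWithin (0:ℝ) (Set.Ioi 0), ∀ s, 0 < s →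
        c * (τ * Real.exp (-(K - S) / (σ * τ))) ≤ bsCall S K τ s → b τ ≤ s := by
  obtain ⟨L, hL, hlim⟩ := hb
  filter_upwards [bs_small S K (2 * L) hS hSK (by linarith)] with σ h c hc
  filter_upwards [h c hc, hlim.eventually_lt_const (show L < 2 * L by linarith)]
    with τ h1 h2 s hs0 hs
  by_contra! hcon
  exact absurd (h1 s hs0 (by linarith)) hs.not_gt

lemma exists_T {P : ℝ → Prop} (h : ∀ᶠ τ in nhdsWithin (0:ℝ) (Set.Ioi 0), P τ) :
    ∃ T : ℝ, 0 < T ∧ ∀ τ : ℝ, 0 < τ → τ ≤ T → P τ := by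
  obtain ⟨T, hT, hs⟩ := mem_nhdsGT_iff_exists_Ioc_subset.1 h
  exact ⟨T, hT, fun τ h1 h2 => hs ⟨h1, h2⟩⟩

/-- Existence of upper and lower dominating PCLVG implied volatility surfaces
for any beliefs given by input functions `a_j, b_j` with strictly positive short-term limits,
provided the barrier `U` does not coincide with any strike. -/
theorem exists_dominating_pclvg_surfaces (n : ℕ) (K : Fin n → ℝ)
    (hKpos : ∀ j, 0 < K j) (hKmono : StrictMono K)
    (U : ℝ) (hU : 0 < U) (hUK : ∀ j, U ≠ K j)
    (a b : Fin n → ℝ → ℝ)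
    (hapos : ∀ j τ, 0 < τ → 0 < a j τ) (hbpos : ∀ j τ, 0 < τ → 0 < b j τ)
    (halim : ∀ j, ∃ L : ℝ, 0 < L ∧
      Filter.Tendsto (a j) (nhdsWithin 0 (Set.Ioi 0)) (nhds L))
    (hblim : ∀ j, ∃ L : ℝ, 0 < L ∧
      Filter.Tendsto (b j) (nhdsWithin 0 (Set.Ioi 0)) (nhds L)) :
    (∃ σu1 σu2 : ℝ, 0 < σu1 ∧ 0 < σu2 ∧ ∃ T : ℝ, 0 < T ∧
      ∀ τ : ℝ, 0 < τ → τ ≤ T →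
        (∀ i, K i < U → ∀ s : ℝ, 0 < s →
          bsCall U (K i) τ s = pclvgCall σu1 σu2 U (K i) τ → s ≤ a i τ) ∧
        (∀ j, U < K j → ∀ s : ℝ, 0 < s →
          bsCall U (K j) τ s = pclvgCall σu1 σu2 U (K j) τ → b j τ ≤ s)) ∧
    (∃ σl1 σl2 : ℝ, 0 < σl1 ∧ 0 < σl2 ∧ ∃ T : ℝ, 0 < T ∧
      ∀ τ : ℝ, 0 < τ → τ ≤ T →
        (∀ i, K i < U → ∀ s : ℝ, 0 < s →
          bsCall U (K i) τ s = pclvgCall σl1 σl2 U (K i) τ → b i τ ≤ s) ∧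
        (∀ j, U < K j → ∀ s : ℝ, 0 < s →
          bsCall U (K j) τ s = pclvgCall σl1 σl2 U (K j) τ → s ≤ a j τ)) := by
  have ev_imp : ∀ {α : Type} {l : Filter α} {q : Prop} {P : α → Prop},
      (q → ∀ᶠ x in l, P x) → ∀ᶠ x in l, q → P x := by
    intro α l q P h
    by_cases hq : q
    · exact (h hq).mono fun x hx _ => hx
    · exact Filter.Eventually.of_forall fun x hx => absurd hx hq
  constructor
  · obtain ⟨σ1, h1, p1⟩ := ((eventually_all.2 fun i => ev_imp fun hi : K i < U =>
      cmp_big (K i) U (hKpos i) hi (a i) (halim i)).and self_mem_nhdsWithin).exists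
    obtain ⟨σ2, h2, p2⟩ := ((eventually_all.2 fun j => ev_imp fun hj : U < K j =>
      cmp_small U (K j) hU hj (b j) (hblim j)).and (eventually_gt_atTop 0)).exists
    refine ⟨σ1, σ2, p1, p2, exists_T ?_⟩
    refine Filter.Eventually.and (eventually_all.2 fun i => ev_imp fun hi => ?_)
      (eventually_all.2 fun j => ev_imp fun hj => ?_)
    · obtain ⟨c, C, hc, hC, h⟩ := put_bounds σ1 σ2 U (K i) p1 p2 (hKpos i) hi
      filter_upwards [h, h1 i hi C hC] with τ g1 g2 s hs he
      exact g2 s (g1 s hs he).1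
    · obtain ⟨c, C, hc, hC, h⟩ := call_bounds σ1 σ2 U (K j) p1 p2 hU hj
      filter_upwards [h, h2 j hj c hc] with τ g1 g2 s hs he
      exact g2 s hs (g1 s hs he).2
  · obtain ⟨σ1, h1, p1⟩ := ((eventually_all.2 fun i => ev_imp fun hi : K i < U =>
      cmp_small (K i) U (hKpos i) hi (b i) (hblim i)).and (eventually_gt_atTop 0)).exists
    obtain ⟨σ2, h2, p2⟩ := ((eventually_all.2 fun j => ev_imp fun hj : U < K j =>
      cmp_big U (K j) hU hj (a j) (halim j)).and self_mem_nhdsWithin).exists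
    refine ⟨σ1, σ2, p1, p2, exists_T ?_⟩
    refine Filter.Eventually.and (eventually_all.2 fun i => ev_imp fun hi => ?_)
      (eventually_all.2 fun j => ev_imp fun hj => ?_)
    · obtain ⟨c, C, hc, hC, h⟩ := put_bounds σ1 σ2 U (K i) p1 p2 (hKpos i) hi
      filter_upwards [h, h1 i hi c hc] with τ g1 g2 s hs he
      exact g2 s hs (g1 s hs he).2
    · obtain ⟨c, C, hc, hC, h⟩ := call_bounds σ1 σ2 U (K j) p1 p2 hU hj
      filter_upwards [h, h2 j hj C hC] with τ g1 g2 s hs he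
      exact g2 s (g1 s hs he).1
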